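/- arXiv:2411.04031 — 4 statements merged into one kernel-verified Lean document; each statement's English description precedes it below -/
import Mathlib

section
/- Every declarative formula of the fragment L_⟐ (the language with the unary modality ⟐ in place of ⟹, in which ⩔ occurs only within the scope of ⟐) is logically equivalent to a ⩔-free formula of L_⟐. -/
/-- Formulas of the inquisitive modal language `L_⟹`. -/
inductive Form (P : Type) : Type
  | atom : P → Form P
  | bot : Form P
  | and : Form P → Form P → Form P
  | impl : Form P → Form P → Form P
  | idisj : Form P → Form P → Form P
  | yields : Form P → Form P → Form P

/-- An inhabited neighborhood model (in-model). -/
structure InModel (P : Type) where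
  W : Type
  ne : Nonempty W
  Nb : W → Set (Set W)
  nb_nonempty : ∀ w, ∀ s ∈ Nb w, s.Nonempty
  V : W → P → Bool

/-- Support of a formula at an information state. -/
def support {P : Type} (M : InModel P) : Form P → Set M.W → Prop
  | .atom p, s => ∀ w ∈ s, M.V w p = true
  | .bot, s => s = ∅
  | .and φ ψ, s => support M φ s ∧ support M ψ s
  | .impl φ ψ, s => ∀ t : Set M.W, t ⊆ s → support M φ t → support M ψ t
  | .idisj φ ψ, s => support M φ s ∨ support M ψ s
  | .yields φ ψ, s => ∀ w ∈ s, ∀ t ∈ M.Nb w, support M φ t → support M ψ t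

/-- Truth at a world: support at the corresponding singleton state. -/
def truth {P : Type} (M : InModel P) (w : M.W) (φ : Form P) : Prop :=
  support M φ {w}

/-- A formula is truth-conditional if support at any state amounts to truth at
every world of the state. -/
def TruthConditional {P : Type} (φ : Form P) : Prop :=
  ∀ (M : InModel P) (s : Set M.W), support M φ s ↔ ∀ w ∈ s, truth M w φ

/-- Logical equivalence: same supporting states in every in-model. -/
def EquivF {P : Type} (φ ψ : Form P) : Prop :=
  ∀ (M : InModel P) (s : Set M.W), support M φ s ↔ support M ψ s

def Form.neg {P : Type} (φ : Form P) : Form P := .impl φ .bot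
def Form.top {P : Type} : Form P := Form.neg .bot
def Form.or {P : Type} (φ ψ : Form P) : Form P := Form.neg (.and (Form.neg φ) (Form.neg ψ))
def Form.box {P : Type} (φ : Form P) : Form P := .yields Form.top φ
def Form.dia {P : Type} (φ : Form P) : Form P := Form.neg (.yields φ .bot)
def Form.quest {P : Type} (φ : Form P) : Form P := .idisj φ (Form.neg φ)

/-- Declaratives: formulas where `⩔` occurs only within the scope of `⟹`. -/
inductive IsDecl {P : Type} : Form P → Prop
  | atom (p : P) : IsDecl (.atom p)
  | bot : IsDecl .bot
  | and {α β : Form P} : IsDecl α → IsDecl β → IsDecl (.and α β)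
  | impl {α β : Form P} : IsDecl α → IsDecl β → IsDecl (.impl α β)
  | yields (φ ψ : Form P) : IsDecl (.yields φ ψ)

/-- The fragment `L_⟐`: formulas built from atoms, `⊥`, `∧`, `→`, `⩔` and the
defined modality `⟐`. -/
inductive InLdia {P : Type} : Form P → Prop
  | atom (p : P) : InLdia (.atom p)
  | bot : InLdia .bot
  | and {φ ψ : Form P} : InLdia φ → InLdia ψ → InLdia (.and φ ψ)
  | impl {φ ψ : Form P} : InLdia φ → InLdia ψ → InLdia (.impl φ ψ)
  | idisj {φ ψ : Form P} : InLdia φ → InLdia ψ → InLdia (.idisj φ ψ)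
  | dia {φ : Form P} : InLdia φ → InLdia (Form.dia φ)

/-- Declaratives of `L_⟐`: `⩔` occurs only within the scope of `⟐`. -/
inductive DeclDia {P : Type} : Form P → Prop
  | atom (p : P) : DeclDia (.atom p)
  | bot : DeclDia .bot
  | and {α β : Form P} : DeclDia α → DeclDia β → DeclDia (.and α β)
  | impl {α β : Form P} : DeclDia α → DeclDia β → DeclDia (.impl α β)
  | dia {φ : Form P} : InLdia φ → DeclDia (Form.dia φ)

/-- `⩔`-free formulas of `L_⟐`. -/
inductive NoIdisjDia {P : Type} : Form P → Prop
  | atom (p : P) : NoIdisjDia (.atom p)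
  | bot : NoIdisjDia .bot
  | and {φ ψ : Form P} : NoIdisjDia φ → NoIdisjDia ψ → NoIdisjDia (.and φ ψ)
  | impl {φ ψ : Form P} : NoIdisjDia φ → NoIdisjDia ψ → NoIdisjDia (.impl φ ψ)
  | dia {φ : Form P} : NoIdisjDia φ → NoIdisjDia (Form.dia φ)


theorem support_mono_aux {P : Type} (M : InModel P) (φ : Form P) :
    ∀ s t : Set M.W, t ⊆ s → support M φ s → support M φ t := by
  induction φ with
  | atom p => intro s t h hs w hw; exact hs w (h hw)
  | bot =>
    intro s t h hs
    simp only [support] at hs ⊢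
    subst hs
    exact Set.subset_empty_iff.mp h
  | and φ ψ ih1 ih2 => intro s t h hs; exact ⟨ih1 s t h hs.1, ih2 s t h hs.2⟩
  | impl φ ψ ih1 ih2 => intro s t h hs u hu; exact hs u (hu.trans h)
  | idisj φ ψ ih1 ih2 => intro s t h hs; exact hs.imp (ih1 s t h) (ih2 s t h)
  | yields φ ψ ih1 ih2 => intro s t h hs w hw; exact hs w (h hw)

theorem support_dia_iff {P : Type} (M : InModel P) (φ : Form P) (s : Set M.W) :
    support M (Form.dia φ) s ↔ ∀ w ∈ s, ∃ u ∈ M.Nb w, support M φ u := by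
  simp only [Form.dia, Form.neg, support]
  constructor
  · intro h w hw
    by_contra hc
    push Not at hc
    have := h {w} (by simpa using hw) (by
      intro v hv u hu hs
      rw [Set.mem_singleton_iff] at hv
      subst hv
      exact absurd hs (hc u hu))
    exact Set.singleton_ne_empty w this
  · intro h t ht hh
    by_contra hc
    obtain ⟨w, hw⟩ := Set.nonempty_iff_ne_empty.mpr hc
    obtain ⟨u, hu, hs⟩ := h w (ht hw)
    exact (M.nb_nonempty w u hu).ne_empty (hh w hw u hu hs)

theorem noIdisj_tc {P : Type} {φ : Form P} (h : NoIdisjDia φ) : TruthConditional φ := by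
  intro M
  simp only [truth]
  induction h with
  | atom p => intro s; simp [support]
  | bot =>
    intro s
    simp only [support, Set.singleton_ne_empty]
    exact Set.eq_empty_iff_forall_notMem
  | and _ _ ih1 ih2 =>
    intro s
    simp only [support]
    rw [ih1 s, ih2 s]
    exact ⟨fun h w hw => ⟨h.1 w hw, h.2 w hw⟩,
      fun h => ⟨fun w hw => (h w hw).1, fun w hw => (h w hw).2⟩⟩
  | impl _ _ ih1 ih2 =>
    intro s
    simp only [support]
    constructor
    · intro h w hw t ht
      exact h t (ht.trans (by simpa using hw))
    · intro h t ht h1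
      rw [ih2 t]
      intro w hw
      exact h w (ht hw) {w} subset_rfl ((ih1 t).1 h1 w hw)
  | dia _ _ =>
    intro s
    simp only [support_dia_iff]
    simp

/-- `L` is a list of resolutions of `φ`. -/
def IsRes {P : Type} (φ : Form P) (L : List (Form P)) : Prop :=
  (∀ α ∈ L, NoIdisjDia α) ∧ ∀ (M : InModel P) (s : Set M.W),
    support M φ s ↔ ∃ α ∈ L, support M α s

theorem exists_prod {P : Type} (A B : List (Form P)) (hA : ∀ α ∈ A, NoIdisjDia α)
    (hB : ∀ α ∈ B, NoIdisjDia α) :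
    ∃ L : List (Form P), (∀ α ∈ L, NoIdisjDia α) ∧ ∀ (M : InModel P) (s : Set M.W),
      (∃ α ∈ L, support M α s) ↔ (∃ α ∈ A, support M α s) ∧ (∃ α ∈ B, support M α s) := by
  refine ⟨(A ×ˢ B).map (fun x => Form.and x.1 x.2), ?_, ?_⟩
  · intro α hα
    obtain ⟨⟨a, b⟩, hx, rfl⟩ := List.mem_map.1 hα
    obtain ⟨ha, hb⟩ := List.mem_product.1 hx
    exact .and (hA a ha) (hB b hb)
  · intro M s
    constructor
    · rintro ⟨α, hα, hs⟩
      obtain ⟨⟨a, b⟩, hx, rfl⟩ := List.mem_map.1 hα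
      obtain ⟨ha, hb⟩ := List.mem_product.1 hx
      exact ⟨⟨a, ha, hs.1⟩, ⟨b, hb, hs.2⟩⟩
    · rintro ⟨⟨a, ha, h1⟩, ⟨b, hb, h2⟩⟩
      exact ⟨.and a b, List.mem_map.2 ⟨(a, b), List.mem_product.2 ⟨ha, hb⟩, rfl⟩, h1, h2⟩

theorem exists_impl {P : Type} (A B : List (Form P)) (hA : ∀ α ∈ A, NoIdisjDia α)
    (hB : ∀ α ∈ B, NoIdisjDia α) :
    ∃ L : List (Form P), (∀ α ∈ L, NoIdisjDia α) ∧ ∀ (M : InModel P) (s : Set M.W),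
      (∃ α ∈ L, support M α s) ↔ ∀ α ∈ A, ∃ β ∈ B, support M (.impl α β) s := by
  induction A with
  | nil =>
    refine ⟨[.impl .bot .bot], ?_, ?_⟩
    · intro α hα
      rw [List.mem_singleton.1 hα]
      exact .impl .bot .bot
    · intro M s
      simp [support]
  | cons a A ih =>
    obtain ⟨L, hL, hs⟩ := ih (fun α h => hA α (List.mem_cons_of_mem _ h))
    obtain ⟨K, hK, hKs⟩ := exists_prod (B.map (fun b => Form.impl a b)) L (by
      intro α hα
      obtain ⟨b, hb, rfl⟩ := List.mem_map.1 hα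
      exact .impl (hA a List.mem_cons_self) (hB b hb)) hL
    refine ⟨K, hK, fun M s => ?_⟩
    rw [hKs, hs]
    simp

theorem exists_tc_disj {P : Type} (L : List (Form P)) (hL : ∀ α ∈ L, NoIdisjDia α) :
    ∃ β : Form P, NoIdisjDia β ∧ ∀ (M : InModel P) (w : M.W),
      support M β {w} ↔ ∃ α ∈ L, support M α {w} := by
  induction L with
  | nil => exact ⟨.bot, .bot, fun M w => by simp [support]⟩
  | cons a L ih =>
    obtain ⟨b, hb, hs⟩ := ih (fun α h => hL α (List.mem_cons_of_mem _ h))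
    have ha := hL a List.mem_cons_self
    refine ⟨Form.or a b, .impl (.and (.impl ha .bot) (.impl hb .bot)) .bot, fun M w => ?_⟩
    have key : ∀ (φ : Form P), support M (Form.neg φ) {w} ↔ ¬ support M φ {w} := by
      intro φ
      simp only [Form.neg, support]
      constructor
      · intro h h1
        exact Set.singleton_ne_empty w (h {w} subset_rfl h1)
      · intro h t ht h1
        rcases Set.subset_singleton_iff_eq.1 ht with h2 | h2
        · exact h2
        · subst h2; exact absurd h1 h
    rw [Form.or, key]
    simp only [support]
    rw [key, key, hs]
    simp only [List.mem_cons, exists_eq_or_imp]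
    exact or_iff_not_and_not.symm

theorem dia_of_res {P : Type} {φ : Form P} {L : List (Form P)} (h : IsRes φ L) :
    ∃ β : Form P, NoIdisjDia β ∧ EquivF (Form.dia φ) β := by
  obtain ⟨β, hβ, hs⟩ := exists_tc_disj (L.map Form.dia) (by
    intro α hα
    obtain ⟨b, hb, rfl⟩ := List.mem_map.1 hα
    exact .dia (h.1 b hb))
  refine ⟨β, hβ, fun M s => ?_⟩
  rw [noIdisj_tc hβ M s, support_dia_iff]
  refine forall₂_congr fun w _ => ?_
  rw [truth, hs]
  constructor
  · rintro ⟨u, hu, h1⟩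
    obtain ⟨α, hα, h2⟩ := (h.2 M u).1 h1
    refine ⟨_, List.mem_map_of_mem hα, ?_⟩
    rw [support_dia_iff]
    rintro v rfl
    exact ⟨u, hu, h2⟩
  · rintro ⟨α, hα, h1⟩
    obtain ⟨b, hb, rfl⟩ := List.mem_map.1 hα
    obtain ⟨u, hu, h2⟩ := (support_dia_iff M b _).1 h1 w rfl
    exact ⟨u, hu, (h.2 M u).2 ⟨b, hb, h2⟩⟩

theorem exists_res {P : Type} {φ : Form P} (h : InLdia φ) : ∃ L, IsRes φ L := by
  induction h with
  | atom p => exact ⟨[.atom p], by simpa using NoIdisjDia.atom p, by simp⟩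
  | bot => exact ⟨[.bot], by simpa using NoIdisjDia.bot, by simp⟩
  | and _ _ ih1 ih2 =>
    obtain ⟨A, hA, hAs⟩ := ih1
    obtain ⟨B, hB, hBs⟩ := ih2
    obtain ⟨L, hL, hs⟩ := exists_prod A B hA hB
    refine ⟨L, hL, fun M s => ?_⟩
    rw [hs, ← hAs, ← hBs]
    rfl
  | impl _ _ ih1 ih2 =>
    obtain ⟨A, hA, hAs⟩ := ih1
    obtain ⟨B, hB, hBs⟩ := ih2
    obtain ⟨L, hL, hs⟩ := exists_impl A B hA hB
    refine ⟨L, hL, fun M s => ?_⟩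
    rw [hs]
    constructor
    · intro h α hα
      let t : Set M.W := {w | w ∈ s ∧ support M α {w}}
      have ht : support M α t := (noIdisj_tc (hA α hα) M t).2 (fun w hw => hw.2)
      obtain ⟨β, hβ, hb⟩ := (hBs M t).1 (h t (fun w hw => hw.1) ((hAs M t).2 ⟨α, hα, ht⟩))
      refine ⟨β, hβ, fun u hu h1 => support_mono_aux M β t u ?_ hb⟩
      intro w hw
      exact ⟨hu hw, (noIdisj_tc (hA α hα) M u).1 h1 w hw⟩
    · intro h t ht h1
      obtain ⟨α, hα, h2⟩ := (hAs M t).1 h1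
      obtain ⟨β, hβ, h3⟩ := h α hα
      exact (hBs M t).2 ⟨β, hβ, h3 t ht h2⟩
  | idisj _ _ ih1 ih2 =>
    obtain ⟨A, hA, hAs⟩ := ih1
    obtain ⟨B, hB, hBs⟩ := ih2
    refine ⟨A ++ B, ?_, fun M s => ?_⟩
    · intro α hα
      exact (List.mem_append.1 hα).elim (hA α) (hB α)
    · simp only [support]
      rw [hAs, hBs]
      simp only [List.mem_append, or_and_right, exists_or]
  | dia _ ih =>
    obtain ⟨L, hL⟩ := ih
    obtain ⟨β, hβ, hs⟩ := dia_of_res hL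
    exact ⟨[β], by simpa using hβ, fun M s => by simpa using hs M s⟩

/-- every declarative of `L_⟐` is equivalent to a `⩔`-free formula
of `L_⟐`. -/
theorem declDia_equiv_idisj_free {P : Type} (α : Form P) (hα : DeclDia α) :
    ∃ β : Form P, NoIdisjDia β ∧ EquivF α β := by
  induction hα with
  | atom p => exact ⟨_, .atom p, fun _ _ => Iff.rfl⟩
  | bot => exact ⟨_, .bot, fun _ _ => Iff.rfl⟩
  | and _ _ ih1 ih2 =>
    obtain ⟨a, ha, h1⟩ := ih1
    obtain ⟨b, hb, h2⟩ := ih2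
    exact ⟨_, .and ha hb, fun M s => and_congr (h1 M s) (h2 M s)⟩
  | impl _ _ ih1 ih2 =>
    obtain ⟨a, ha, h1⟩ := ih1
    obtain ⟨b, hb, h2⟩ := ih2
    exact ⟨_, .impl ha hb, fun M s => forall₂_congr fun t _ => imp_congr (h1 M t) (h2 M t)⟩
  | dia h =>
    obtain ⟨L, hL⟩ := exists_res h
    exact dia_of_res hL
end

section
/- (Monotonicity properties of fragments) (i) Every formula of the fragment L_⟐ is upward-invariant (and hence convex- and union-invariant). (ii) Every formula of the fragment L_⊞ is downward-invariant (and hence convex-invariant). (iii) Every formula of the fragment L_⊞⟐ is convex-invariant. (iv) Every formula of the fragment L_⟹! is union-invariant. -/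
/-- The fragment `L_⊞`. -/
inductive InLbox {P : Type} : Form P → Prop
  | atom (p : P) : InLbox (.atom p)
  | bot : InLbox .bot
  | and {φ ψ : Form P} : InLbox φ → InLbox ψ → InLbox (.and φ ψ)
  | impl {φ ψ : Form P} : InLbox φ → InLbox ψ → InLbox (.impl φ ψ)
  | idisj {φ ψ : Form P} : InLbox φ → InLbox ψ → InLbox (.idisj φ ψ)
  | box {φ : Form P} : InLbox φ → InLbox (Form.box φ)

/-- The fragment `L_⊞⟐`. -/
inductive InLboxdia {P : Type} : Form P → Prop
  | atom (p : P) : InLboxdia (.atom p)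
  | bot : InLboxdia .bot
  | and {φ ψ : Form P} : InLboxdia φ → InLboxdia ψ → InLboxdia (.and φ ψ)
  | impl {φ ψ : Form P} : InLboxdia φ → InLboxdia ψ → InLboxdia (.impl φ ψ)
  | idisj {φ ψ : Form P} : InLboxdia φ → InLboxdia ψ → InLboxdia (.idisj φ ψ)
  | box {φ : Form P} : InLboxdia φ → InLboxdia (Form.box φ)
  | dia {φ : Form P} : InLboxdia φ → InLboxdia (Form.dia φ)

/-- The fragment `L_⟹!`: every modal subformula has the form `φ ⟹ α` with `α`
a declarative. -/
inductive InLyd {P : Type} : Form P → Prop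
  | atom (p : P) : InLyd (.atom p)
  | bot : InLyd .bot
  | and {φ ψ : Form P} : InLyd φ → InLyd ψ → InLyd (.and φ ψ)
  | impl {φ ψ : Form P} : InLyd φ → InLyd ψ → InLyd (.impl φ ψ)
  | idisj {φ ψ : Form P} : InLyd φ → InLyd ψ → InLyd (.idisj φ ψ)
  | yields {φ α : Form P} : InLyd φ → InLyd α → IsDecl α → InLyd (.yields φ α)

/-- Upward closure `M^↑`. -/
def InModel.up {P : Type} (M : InModel P) : InModel P where
  W := M.W
  ne := M.ne
  Nb := fun w => {t | t.Nonempty ∧ ∃ s ∈ M.Nb w, s ⊆ t}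
  nb_nonempty := fun _ _ hs => hs.1
  V := M.V

/-- Downward closure `M^↓`. -/
def InModel.down {P : Type} (M : InModel P) : InModel P where
  W := M.W
  ne := M.ne
  Nb := fun w => {t | t.Nonempty ∧ ∃ s ∈ M.Nb w, t ⊆ s}
  nb_nonempty := fun _ _ hs => hs.1
  V := M.V

/-- Convex closure `M^↕`. -/
def InModel.conv {P : Type} (M : InModel P) : InModel P where
  W := M.W
  ne := M.ne
  Nb := fun w => {t | t.Nonempty ∧ ∃ s ∈ M.Nb w, ∃ s' ∈ M.Nb w, s ⊆ t ∧ t ⊆ s'}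
  nb_nonempty := fun _ _ hs => hs.1
  V := M.V

/-- Union closure `M^∪`. -/
def InModel.uni {P : Type} (M : InModel P) : InModel P where
  W := M.W
  ne := M.ne
  Nb := fun w => {t | t.Nonempty ∧ ∃ S ⊆ M.Nb w, t = ⋃₀ S}
  nb_nonempty := fun _ _ hs => hs.1
  V := M.V

def UpInvariant {P : Type} (φ : Form P) : Prop :=
  ∀ (M : InModel P) (s : Set M.W), support M φ s ↔ support M.up φ s

def DownInvariant {P : Type} (φ : Form P) : Prop :=
  ∀ (M : InModel P) (s : Set M.W), support M φ s ↔ support M.down φ s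

def ConvexInvariant {P : Type} (φ : Form P) : Prop :=
  ∀ (M : InModel P) (s : Set M.W), support M φ s ↔ support M.conv φ s

def UnionInvariant {P : Type} (φ : Form P) : Prop :=
  ∀ (M : InModel P) (s : Set M.W), support M φ s ↔ support M.uni φ s

theorem support_mono {P : Type} (M : InModel P) (φ : Form P) :
    ∀ {s t : Set M.W}, t ⊆ s → support M φ s → support M φ t := by
  induction φ with
  | atom p => intro s t h hs w hw; exact hs w (h hw)
  | bot => intro s t h hs; exact Set.subset_eq_empty h hs
  | and φ ψ h1 h2 => intro s t h hs; exact ⟨h1 h hs.1, h2 h hs.2⟩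
  | impl φ ψ h1 h2 => intro s t h hs u hu; exact hs u (hu.trans h)
  | idisj φ ψ h1 h2 => intro s t h hs; exact hs.imp (h1 h) (h2 h)
  | yields φ ψ h1 h2 => intro s t h hs w hw; exact hs w (h hw)

/-- Declaratives are closed under arbitrary unions of supporting states. -/
theorem support_sUnion {P : Type} (M : InModel P) {α : Form P} (hα : IsDecl α) :
    ∀ S : Set (Set M.W), (∀ s ∈ S, support M α s) → support M α (⋃₀ S) := by
  induction hα with
  | atom p => rintro S h w ⟨s, hs, hw⟩; exact h s hs w hw
  | bot => intro S h; exact Set.sUnion_eq_empty.2 h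
  | and _ _ h1 h2 =>
    intro S h; exact ⟨h1 S fun s hs => (h s hs).1, h2 S fun s hs => (h s hs).2⟩
  | @impl α β _ _ h1 h2 =>
    intro S h t ht hφ
    have e : t = ⋃₀ ((fun s => t ∩ s) '' S) := by
      ext w
      constructor
      · intro hw
        obtain ⟨s, hs, hws⟩ := ht hw
        exact ⟨t ∩ s, ⟨s, hs, rfl⟩, hw, hws⟩
      · rintro ⟨_, ⟨s, hs, rfl⟩, hw⟩
        exact hw.1
    rw [e]
    apply h2
    rintro _ ⟨s, hs, rfl⟩
    exact h s hs _ Set.inter_subset_right (support_mono M α Set.inter_subset_left hφ)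
  | yields φ ψ => rintro S h w ⟨s, hs, hw⟩; exact h s hs w hw

/-- The model `M` with its neighborhood map replaced. -/
def InModel.repl {P : Type} (M : InModel P) (N : M.W → Set (Set M.W))
    (h : ∀ w, ∀ s ∈ N w, s.Nonempty) : InModel P := ⟨M.W, M.ne, N, h, M.V⟩

/-- Support is unchanged by replacing the neighborhood map. -/
def NbInv {P : Type} (M : InModel P) (N : M.W → Set (Set M.W))
    (h : ∀ w, ∀ s ∈ N w, s.Nonempty) (φ : Form P) : Prop :=
  ∀ s : Set M.W, support M φ s ↔ support (M.repl N h) φ s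

section
variable {P : Type} {M : InModel P} {N : M.W → Set (Set M.W)}
  {h : ∀ w, ∀ s ∈ N w, s.Nonempty}

theorem NbInv.atom (p : P) : NbInv M N h (.atom p) := fun _ => Iff.rfl

theorem NbInv.bot : NbInv M N h .bot := fun _ => Iff.rfl

theorem NbInv.and {φ ψ : Form P} (h1 : NbInv M N h φ) (h2 : NbInv M N h ψ) :
    NbInv M N h (.and φ ψ) := fun s => and_congr (h1 s) (h2 s)

theorem NbInv.idisj {φ ψ : Form P} (h1 : NbInv M N h φ) (h2 : NbInv M N h ψ) :
    NbInv M N h (.idisj φ ψ) := fun s => or_congr (h1 s) (h2 s)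

theorem NbInv.impl {φ ψ : Form P} (h1 : NbInv M N h φ) (h2 : NbInv M N h ψ) :
    NbInv M N h (.impl φ ψ) := fun _ =>
  forall_congr' fun t => imp_congr Iff.rfl (imp_congr (h1 t) (h2 t))

theorem NbInv.dia {φ : Form P} (hsub : ∀ w, M.Nb w ⊆ N w)
    (hup : ∀ w, ∀ t ∈ N w, ∃ s ∈ M.Nb w, s ⊆ t) (h1 : NbInv M N h φ) :
    NbInv M N h (Form.dia φ) := by
  refine NbInv.impl (fun s => ⟨fun H w hw t ht hφ => ?_, fun H w hw t ht hφ => ?_⟩) NbInv.bot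
  · obtain ⟨u, hu, hut⟩ := hup w t ht
    have hu0 : u = ∅ := H w hw u hu (support_mono M φ hut ((h1 t).2 hφ))
    exact absurd hu0 (M.nb_nonempty w u hu).ne_empty
  · exact H w hw t (hsub w ht) ((h1 t).1 hφ)

theorem NbInv.box {φ : Form P} (hsub : ∀ w, M.Nb w ⊆ N w)
    (hdown : ∀ w, ∀ t ∈ N w, ∃ s ∈ M.Nb w, t ⊆ s) (h1 : NbInv M N h φ) :
    NbInv M N h (Form.box φ) := by
  refine fun s => ⟨fun H w hw t ht _ => ?_, fun H w hw t ht _ => ?_⟩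
  · obtain ⟨u, hu, hut⟩ := hdown w t ht
    exact (h1 t).1 (support_mono M φ hut (H w hw u hu fun _ _ a => a))
  · exact (h1 t).2 (H w hw t (hsub w ht) fun _ _ a => a)

theorem NbInv.of_dia {φ : Form P} (hsub : ∀ w, M.Nb w ⊆ N w)
    (hup : ∀ w, ∀ t ∈ N w, ∃ s ∈ M.Nb w, s ⊆ t) (hφ : InLdia φ) : NbInv M N h φ := by
  induction hφ with
  | atom p => exact NbInv.atom p
  | bot => exact NbInv.bot
  | and _ _ a b => exact a.and b
  | impl _ _ a b => exact a.impl b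
  | idisj _ _ a b => exact a.idisj b
  | dia _ a => exact a.dia hsub hup

theorem NbInv.of_box {φ : Form P} (hsub : ∀ w, M.Nb w ⊆ N w)
    (hdown : ∀ w, ∀ t ∈ N w, ∃ s ∈ M.Nb w, t ⊆ s) (hφ : InLbox φ) : NbInv M N h φ := by
  induction hφ with
  | atom p => exact NbInv.atom p
  | bot => exact NbInv.bot
  | and _ _ a b => exact a.and b
  | impl _ _ a b => exact a.impl b
  | idisj _ _ a b => exact a.idisj b
  | box _ a => exact a.box hsub hdown

theorem NbInv.of_boxdia {φ : Form P} (hsub : ∀ w, M.Nb w ⊆ N w)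
    (hup : ∀ w, ∀ t ∈ N w, ∃ s ∈ M.Nb w, s ⊆ t)
    (hdown : ∀ w, ∀ t ∈ N w, ∃ s ∈ M.Nb w, t ⊆ s) (hφ : InLboxdia φ) : NbInv M N h φ := by
  induction hφ with
  | atom p => exact NbInv.atom p
  | bot => exact NbInv.bot
  | and _ _ a b => exact a.and b
  | impl _ _ a b => exact a.impl b
  | idisj _ _ a b => exact a.idisj b
  | box _ a => exact a.box hsub hdown
  | dia _ a => exact a.dia hsub hup

theorem NbInv.of_yd {φ : Form P} (hsub : ∀ w, M.Nb w ⊆ N w)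
    (hU : ∀ w, ∀ t ∈ N w, ∃ S ⊆ M.Nb w, t = ⋃₀ S) (hφ : InLyd φ) : NbInv M N h φ := by
  induction hφ with
  | atom p => exact NbInv.atom p
  | bot => exact NbInv.bot
  | and _ _ a b => exact a.and b
  | impl _ _ a b => exact a.impl b
  | idisj _ _ a b => exact a.idisj b
  | @yields φ α _ _ hα a b =>
    refine fun s => ⟨fun H w hw t ht hφ => ?_, fun H w hw t ht hφ => ?_⟩
    · obtain ⟨S, hS, rfl⟩ := hU w t ht
      refine (b _).1 (support_sUnion M hα S fun u hu => H w hw u (hS hu) ?_)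
      exact support_mono M φ (Set.subset_sUnion_of_mem hu) ((a _).2 hφ)
    · exact (b t).2 (H w hw t (hsub w ht) ((a t).1 hφ))

end

theorem conv_sub {P : Type} (M : InModel P) (w : M.W) : M.Nb w ⊆ M.conv.Nb w :=
  fun t ht => ⟨M.nb_nonempty w t ht, t, ht, t, ht, subset_rfl, subset_rfl⟩

theorem conv_up {P : Type} (M : InModel P) (w : M.W) :
    ∀ t ∈ M.conv.Nb w, ∃ s ∈ M.Nb w, s ⊆ t :=
  fun _ ⟨_, s, hs, _, _, h, _⟩ => ⟨s, hs, h⟩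

theorem conv_down {P : Type} (M : InModel P) (w : M.W) :
    ∀ t ∈ M.conv.Nb w, ∃ s ∈ M.Nb w, t ⊆ s :=
  fun _ ⟨_, _, _, s, hs, _, h⟩ => ⟨s, hs, h⟩

theorem uni_sub {P : Type} (M : InModel P) (w : M.W) : M.Nb w ⊆ M.uni.Nb w :=
  fun t ht => ⟨M.nb_nonempty w t ht, {t}, Set.singleton_subset_iff.2 ht,
    (Set.sUnion_singleton t).symm⟩

theorem uni_up {P : Type} (M : InModel P) (w : M.W) :
    ∀ t ∈ M.uni.Nb w, ∃ s ∈ M.Nb w, s ⊆ t := by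
  rintro t ⟨⟨x, hx⟩, S, hS, rfl⟩
  obtain ⟨s, hs, -⟩ := hx
  exact ⟨s, hS hs, Set.subset_sUnion_of_mem hs⟩

/-- monotonicity properties of the fragments. -/
theorem monotonicity_of_fragments {P : Type} :
    (∀ φ : Form P, InLdia φ →
      UpInvariant φ ∧ ConvexInvariant φ ∧ UnionInvariant φ) ∧
    (∀ φ : Form P, InLbox φ → DownInvariant φ ∧ ConvexInvariant φ) ∧
    (∀ φ : Form P, InLboxdia φ → ConvexInvariant φ) ∧
    (∀ φ : Form P, InLyd φ → UnionInvariant φ) := by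
  refine ⟨fun φ hφ => ⟨fun M => ?_, fun M => ?_, fun M => ?_⟩,
    fun φ hφ => ⟨fun M => ?_, fun M => ?_⟩, fun φ hφ M => ?_, fun φ hφ M => ?_⟩
  · exact NbInv.of_dia (M := M) (N := M.up.Nb) (h := M.up.nb_nonempty)
      (fun w t ht => ⟨M.nb_nonempty w t ht, t, ht, subset_rfl⟩) (fun _ _ ht => ht.2) hφ
  · exact NbInv.of_dia (M := M) (N := M.conv.Nb) (h := M.conv.nb_nonempty) (conv_sub M) (conv_up M) hφ
  · exact NbInv.of_dia (M := M) (N := M.uni.Nb) (h := M.uni.nb_nonempty) (uni_sub M) (uni_up M) hφ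
  · exact NbInv.of_box (M := M) (N := M.down.Nb) (h := M.down.nb_nonempty)
      (fun w t ht => ⟨M.nb_nonempty w t ht, t, ht, subset_rfl⟩) (fun _ _ ht => ht.2) hφ
  · exact NbInv.of_box (M := M) (N := M.conv.Nb) (h := M.conv.nb_nonempty) (conv_sub M) (conv_down M) hφ
  · exact NbInv.of_boxdia (M := M) (N := M.conv.Nb) (h := M.conv.nb_nonempty) (conv_sub M) (conv_up M) (conv_down M) hφ
  · exact NbInv.of_yd (M := M) (N := M.uni.Nb) (h := M.uni.nb_nonempty) (uni_sub M) (fun _ _ ht => ht.2) hφ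
end

section
/- (Bisimulation invariance) If two world-pointed in-models satisfy M,w ∼ M',w', then they make true exactly the same formulas of L_⟹; and if two state-pointed in-models satisfy M,s ∼ M',s', then they support exactly the same formulas of L_⟹. -/
/-- Modal depth. -/
def md {P : Type} : Form P → ℕ
  | .atom _ => 0
  | .bot => 0
  | .and φ ψ => max (md φ) (md ψ)
  | .impl φ ψ => max (md φ) (md ψ)
  | .idisj φ ψ => max (md φ) (md ψ)
  | .yields φ ψ => max (md φ) (md ψ) + 1

/-- Egli-Milner lifting of a relation between worlds to states. -/
def EM {P : Type} {M M' : InModel P} (Z : M.W → M'.W → Prop)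
    (s : Set M.W) (s' : Set M'.W) : Prop :=
  (∀ w ∈ s, ∃ w' ∈ s', Z w w') ∧ (∀ w' ∈ s', ∃ w ∈ s, Z w w')

/-- `Z` is an `n`-bisimulation between `M` and `M'` (indices `i ≤ n`). -/
def IsNBisim {P : Type} (M M' : InModel P) (n : ℕ)
    (Z : ℕ → M.W → M'.W → Prop) : Prop :=
  ∀ i ≤ n, ∀ w w', Z i w w' →
    (∀ p : P, M.V w p = M'.V w' p) ∧
    (∀ j : ℕ, i = j + 1 →
      (∀ s ∈ M.Nb w, ∃ s' ∈ M'.Nb w', EM (Z j) s s') ∧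
      (∀ s' ∈ M'.Nb w', ∃ s ∈ M.Nb w, EM (Z j) s s'))

/-- `n`-bisimilarity of world-pointed models. -/
def NBisimW {P : Type} (n : ℕ) (M : InModel P) (w : M.W)
    (M' : InModel P) (w' : M'.W) : Prop :=
  ∃ Z, IsNBisim M M' n Z ∧ Z n w w'

/-- `n`-bisimilarity of state-pointed models. -/
def NBisimS {P : Type} (n : ℕ) (M : InModel P) (s : Set M.W)
    (M' : InModel P) (s' : Set M'.W) : Prop :=
  ∃ Z, IsNBisim M M' n Z ∧ EM (Z n) s s'

/-- `Z` is a bisimulation between `M` and `M'`. -/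
def IsBisim {P : Type} (M M' : InModel P) (Z : M.W → M'.W → Prop) : Prop :=
  (∃ w w', Z w w') ∧
  ∀ w w', Z w w' →
    (∀ p : P, M.V w p = M'.V w' p) ∧
    (∀ s ∈ M.Nb w, ∃ s' ∈ M'.Nb w', EM Z s s') ∧
    (∀ s' ∈ M'.Nb w', ∃ s ∈ M.Nb w, EM Z s s')

/-- Bisimilarity of world-pointed models. -/
def BisimW {P : Type} (M : InModel P) (w : M.W)
    (M' : InModel P) (w' : M'.W) : Prop :=
  ∃ Z, IsBisim M M' Z ∧ Z w w'

/-- Bisimilarity of state-pointed models. -/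
def BisimS {P : Type} (M : InModel P) (s : Set M.W)
    (M' : InModel P) (s' : Set M'.W) : Prop :=
  ∃ Z, IsBisim M M' Z ∧ EM Z s s'

theorem support_iff_of_EM {P : Type} {M M' : InModel P} {Z : M.W → M'.W → Prop}
    (hZ : IsBisim M M' Z) (φ : Form P) :
    ∀ (s : Set M.W) (s' : Set M'.W), EM Z s s' → (support M φ s ↔ support M' φ s') := by
  induction φ with
  | atom p =>
    intro s s' h
    simp only [support]
    constructor
    · intro H w' hw'
      obtain ⟨w, hw, hz⟩ := h.2 w' hw'
      rw [← (hZ.2 w w' hz).1 p]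
      exact H w hw
    · intro H w hw
      obtain ⟨w', hw', hz⟩ := h.1 w hw
      rw [(hZ.2 w w' hz).1 p]
      exact H w' hw'
  | bot =>
    intro s s' h
    simp only [support, Set.eq_empty_iff_forall_notMem]
    constructor
    · intro H w' hw'
      obtain ⟨w, hw, _⟩ := h.2 w' hw'
      exact H w hw
    · intro H w hw
      obtain ⟨w', hw', _⟩ := h.1 w hw
      exact H w' hw'
  | and φ ψ ihφ ihψ =>
    intro s s' h
    simp only [support, ihφ s s' h, ihψ s s' h]
  | idisj φ ψ ihφ ihψ =>
    intro s s' h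
    simp only [support, ihφ s s' h, ihψ s s' h]
  | impl φ ψ ihφ ihψ =>
    intro s s' h
    simp only [support]
    constructor
    · intro H t' ht' hφ
      have e : EM Z {w | w ∈ s ∧ ∃ w' ∈ t', Z w w'} t' := by
        refine ⟨fun w hw => hw.2, fun w' hw' => ?_⟩
        obtain ⟨w, hw, hz⟩ := h.2 w' (ht' hw')
        exact ⟨w, ⟨hw, w', hw', hz⟩, hz⟩
      exact (ihψ _ _ e).1 (H _ (fun w hw => hw.1) ((ihφ _ _ e).2 hφ))
    · intro H t ht hφ
      have e : EM Z t {w' | w' ∈ s' ∧ ∃ w ∈ t, Z w w'} := by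
        refine ⟨fun w hw => ?_, fun w' hw' => hw'.2⟩
        obtain ⟨w', hw', hz⟩ := h.1 w (ht hw)
        exact ⟨w', ⟨hw', w, hw, hz⟩, hz⟩
      exact (ihψ _ _ e).2 (H _ (fun w hw => hw.1) ((ihφ _ _ e).1 hφ))
  | yields φ ψ ihφ ihψ =>
    intro s s' h
    simp only [support]
    constructor
    · intro H w' hw' t' ht' hφ
      obtain ⟨w, hw, hz⟩ := h.2 w' hw'
      obtain ⟨t, ht, e⟩ := (hZ.2 w w' hz).2.2 t' ht'
      exact (ihψ _ _ e).1 (H w hw t ht ((ihφ _ _ e).2 hφ))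
    · intro H w hw t ht hφ
      obtain ⟨w', hw', hz⟩ := h.1 w hw
      obtain ⟨t', ht', e⟩ := (hZ.2 w w' hz).2.1 t ht
      exact (ihψ _ _ e).2 (H w' hw' t' ht' ((ihφ _ _ e).1 hφ))

/-- bisimulation invariance of `InqML_⟹`. -/
theorem bisim_invariance {P : Type} :
    (∀ (M M' : InModel P) (w : M.W) (w' : M'.W), BisimW M w M' w' →
      ∀ φ : Form P, truth M w φ ↔ truth M' w' φ) ∧
    (∀ (M M' : InModel P) (s : Set M.W) (s' : Set M'.W), BisimS M s M' s' →
      ∀ φ : Form P, support M φ s ↔ support M' φ s') := by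
  refine ⟨?_, ?_⟩
  · rintro M M' w w' ⟨Z, hZ, hz⟩ φ
    refine support_iff_of_EM hZ φ {w} {w'} ⟨?_, ?_⟩
    · rintro v rfl
      exact ⟨w', rfl, hz⟩
    · rintro v rfl
      exact ⟨w, rfl, hz⟩
  · rintro M M' s s' ⟨Z, hZ, h⟩ φ
    exact support_iff_of_EM hZ φ s s' h
end

section
/- (Expressive power of InqML_⟹ with respect to worlds) Assume the set P of atoms is finite. A world-property C (a class of world-pointed in-models) is definable in InqML_⟹ (i.e., C = {⟨M,w⟩ : M,w ⊨ φ} for some formula φ of L_⟹) if and only if C is closed under ∼ₙ for some n ∈ ℕ. -/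
/-- Finite type of `n`-types. -/
def NTy (P : Type) : ℕ → Type
  | 0 => P → Bool
  | n + 1 => (P → Bool) × Set (Set (NTy P n))

theorem NTy.finite (P : Type) [Finite P] : ∀ n, Finite (NTy P n)
  | 0 => by unfold NTy; infer_instance
  | n + 1 => by
    have := NTy.finite P n
    have : Finite (Set (NTy P n)) := inferInstance
    unfold NTy; infer_instance

/-- The `n`-type of a world. -/
def nty {P : Type} (M : InModel P) : (n : ℕ) → M.W → NTy P n
  | 0, w => M.V w
  | n + 1, w => (M.V w, {B | ∃ t ∈ M.Nb w, nty M n '' t = B})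

theorem EM_of_image {P : Type} {M M' : InModel P} {n : ℕ} {s : Set M.W} {s' : Set M'.W}
    (h : nty M n '' s = nty M' n '' s') :
    EM (M := M) (M' := M') (fun w w' => nty M n w = nty M' n w') s s' := by
  constructor
  · intro w hw
    have : nty M n w ∈ nty M' n '' s' := h ▸ ⟨w, hw, rfl⟩
    obtain ⟨w', hw', e⟩ := this
    exact ⟨w', hw', e.symm⟩
  · intro w' hw'
    have : nty M' n w' ∈ nty M n '' s := h ▸ ⟨w', hw', rfl⟩
    obtain ⟨w, hw, e⟩ := this
    exact ⟨w, hw, e⟩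

theorem nbisim_of_nty {P : Type} {M M' : InModel P} {n : ℕ} {w : M.W} {w' : M'.W}
    (h : nty M n w = nty M' n w') : NBisimW n M w M' w' := by
  refine ⟨fun i w w' => nty M i w = nty M' i w', ?_, h⟩
  intro i _ w w' h
  constructor
  · intro p
    cases i with
    | zero => exact congrFun h p
    | succ i => exact congrFun (congrArg Prod.fst h) p
  · rintro j rfl
    have h2 : {B | ∃ t ∈ M.Nb w, nty M j '' t = B} = {B | ∃ t ∈ M'.Nb w', nty M' j '' t = B} :=
      congrArg Prod.snd h
    constructor
    · intro s hs
      have : nty M j '' s ∈ {B | ∃ t ∈ M'.Nb w', nty M' j '' t = B} := h2 ▸ ⟨s, hs, rfl⟩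
      obtain ⟨s', hs', e⟩ := this
      exact ⟨s', hs', EM_of_image e.symm⟩
    · intro s' hs'
      have : nty M' j '' s' ∈ {B | ∃ t ∈ M.Nb w, nty M j '' t = B} := h2 ▸ ⟨s', hs', rfl⟩
      obtain ⟨s, hs, e⟩ := this
      exact ⟨s, hs, EM_of_image e⟩

theorem support_of_nbisim {P : Type} {M M' : InModel P} {n : ℕ}
    {Z : ℕ → M.W → M'.W → Prop} (hZ : IsNBisim M M' n Z) (φ : Form P) :
    ∀ i ≤ n, md φ ≤ i → ∀ s s', EM (Z i) s s' → (support M φ s ↔ support M' φ s') := by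
  induction φ with
  | atom p =>
    intro i hi _ s s' ⟨h1, h2⟩
    simp only [support]
    constructor
    · intro h w' hw'
      obtain ⟨w, hw, e⟩ := h2 w' hw'
      rw [← (hZ i hi w w' e).1 p]; exact h w hw
    · intro h w hw
      obtain ⟨w', hw', e⟩ := h1 w hw
      rw [(hZ i hi w w' e).1 p]; exact h w' hw'
  | bot =>
    intro i hi _ s s' ⟨h1, h2⟩
    simp only [support, Set.eq_empty_iff_forall_notMem]
    constructor
    · intro h w' hw'
      obtain ⟨w, hw, e⟩ := h2 w' hw'
      exact h w hw
    · intro h w hw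
      obtain ⟨w', hw', e⟩ := h1 w hw
      exact h w' hw'
  | and φ ψ ih1 ih2 =>
    intro i hi hm s s' h
    simp only [md, max_le_iff] at hm
    simp only [support, ih1 i hi hm.1 s s' h, ih2 i hi hm.2 s s' h]
  | idisj φ ψ ih1 ih2 =>
    intro i hi hm s s' h
    simp only [md, max_le_iff] at hm
    simp only [support, ih1 i hi hm.1 s s' h, ih2 i hi hm.2 s s' h]
  | impl φ ψ ih1 ih2 =>
    intro i hi hm s s' ⟨h1, h2⟩
    simp only [md, max_le_iff] at hm
    simp only [support]
    constructor
    · intro h t' ht' hφ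
      have e : EM (Z i) {w | w ∈ s ∧ ∃ w' ∈ t', Z i w w'} t' := by
        refine ⟨fun w hw => hw.2, fun w' hw' => ?_⟩
        obtain ⟨w, hw, e⟩ := h2 w' (ht' hw')
        exact ⟨w, ⟨hw, w', hw', e⟩, e⟩
      exact (ih2 i hi hm.2 _ _ e).1 (h _ (fun w hw => hw.1) ((ih1 i hi hm.1 _ _ e).2 hφ))
    · intro h t ht hφ
      have e : EM (Z i) t {w' | w' ∈ s' ∧ ∃ w ∈ t, Z i w w'} := by
        refine ⟨fun w hw => ?_, fun w' hw' => hw'.2⟩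
        obtain ⟨w', hw', e⟩ := h1 w (ht hw)
        exact ⟨w', ⟨hw', w, hw, e⟩, e⟩
      exact (ih2 i hi hm.2 _ _ e).2 (h _ (fun w hw => hw.1) ((ih1 i hi hm.1 _ _ e).1 hφ))
  | yields φ ψ ih1 ih2 =>
    intro i hi hm s s' ⟨h1, h2⟩
    simp only [md] at hm
    obtain ⟨j, rfl⟩ : ∃ j, i = j + 1 := ⟨i - 1, by omega⟩
    have hj : j ≤ n := by omega
    have m1 : md φ ≤ j := by omega
    have m2 : md ψ ≤ j := by omega
    simp only [support]
    constructor
    · intro h w' hw' t' ht' hφ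
      obtain ⟨w, hw, e⟩ := h2 w' hw'
      obtain ⟨t, ht, e⟩ := ((hZ _ hi w w' e).2 j rfl).2 t' ht'
      exact (ih2 j hj m2 _ _ e).1 (h w hw t ht ((ih1 j hj m1 _ _ e).2 hφ))
    · intro h w hw t ht hφ
      obtain ⟨w', hw', e⟩ := h1 w hw
      obtain ⟨t', ht', e⟩ := ((hZ _ hi w w' e).2 j rfl).1 t ht
      exact (ih2 j hj m2 _ _ e).2 (h w' hw' t' ht' ((ih1 j hj m1 _ _ e).1 hφ))

/-- World properties expressed by a truth-conditional formula. -/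
def Dec {P : Type} (Q : ∀ M : InModel P, M.W → Prop) : Prop :=
  ∃ α : Form P, ∀ (M : InModel P) (s : Set M.W), support M α s ↔ ∀ w ∈ s, Q M w

theorem Dec.congr {P : Type} {Q R : ∀ M : InModel P, M.W → Prop} (h : Dec Q)
    (e : ∀ M w, R M w ↔ Q M w) : Dec R := by
  obtain ⟨α, hα⟩ := h
  exact ⟨α, fun M s => by simp only [hα, e]⟩

theorem Dec.and {P : Type} {Q R : ∀ M : InModel P, M.W → Prop} (h : Dec Q) (h' : Dec R) :
    Dec (fun M w => Q M w ∧ R M w) := by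
  obtain ⟨α, hα⟩ := h
  obtain ⟨β, hβ⟩ := h'
  exact ⟨.and α β, fun M s => by simp only [support, hα, hβ]; grind⟩

theorem Dec.not {P : Type} {Q : ∀ M : InModel P, M.W → Prop} (h : Dec Q) :
    Dec (fun M w => ¬ Q M w) := by
  obtain ⟨α, hα⟩ := h
  refine ⟨.impl α .bot, fun M s => ?_⟩
  simp only [support, hα]
  constructor
  · intro h w hw hq
    have := h {w} (by simpa using hw) (by simpa using hq)
    simp at this
  · intro h t ht hq
    rw [Set.eq_empty_iff_forall_notMem]
    exact fun w hw => h w (ht hw) (hq w hw)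

theorem Dec.true {P : Type} : Dec (fun (M : InModel P) (_ : M.W) => True) :=
  ⟨.impl .bot .bot, fun M s => by simp [support]⟩

theorem Dec.all {P ι : Type} [Finite ι] {Q : ι → ∀ M : InModel P, M.W → Prop}
    (h : ∀ i, Dec (Q i)) : Dec (fun M w => ∀ i, Q i M w) := by
  classical
  have := Fintype.ofFinite ι
  have key : ∀ F : Finset ι, Dec (fun M w => ∀ i ∈ F, Q i M w) := by
    intro F
    induction F using Finset.induction_on with
    | empty => exact Dec.true.congr (by simp)
    | insert a F _ ih => exact ((h a).and ih).congr (by simp)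
  exact (key Finset.univ).congr (by simp)

theorem Dec.imp_const {P : Type} (a : Prop) {Q : ∀ M : InModel P, M.W → Prop} (h : Dec Q) :
    Dec (fun M w => a → Q M w) := by
  by_cases ha : a
  · exact h.congr (by simp [ha])
  · exact Dec.true.congr (by simp [ha])

theorem Dec.iff_const {P : Type} (a : Prop) {Q : ∀ M : InModel P, M.W → Prop} (h : Dec Q) :
    Dec (fun M w => Q M w ↔ a) := by
  by_cases ha : a
  · exact h.congr (by simp [ha])
  · exact h.not.congr (by simp [ha])

theorem exists_idisj {P ι : Type} [Finite ι] (f : ι → Form P) :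
    ∃ φ : Form P, ∀ (M : InModel P) (s : Set M.W),
      support M φ s ↔ (s = ∅ ∨ ∃ i, support M (f i) s) := by
  classical
  have := Fintype.ofFinite ι
  have key : ∀ F : Finset ι, ∃ φ : Form P, ∀ (M : InModel P) (s : Set M.W),
      support M φ s ↔ (s = ∅ ∨ ∃ i ∈ F, support M (f i) s) := by
    intro F
    induction F using Finset.induction_on with
    | empty => exact ⟨.bot, by simp [support]⟩
    | insert a F _ ih =>
      obtain ⟨φ, hφ⟩ := ih
      refine ⟨.idisj (f a) φ, fun M s => ?_⟩
      simp only [support, hφ, Finset.exists_mem_insert]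
      tauto
  obtain ⟨φ, hφ⟩ := key Finset.univ
  exact ⟨φ, fun M s => by simp [hφ]⟩

theorem dec_mem {P T : Type} [Finite T] (f : ∀ M : InModel P, M.W → T)
    (h : ∀ τ, Dec (fun M w => f M w = τ)) (A : Set T) : Dec (fun M w => f M w ∈ A) := by
  refine (Dec.all (fun τ => Dec.imp_const (τ ∉ A) (h τ).not)).congr fun M w => ?_
  constructor
  · intro hA τ hτ e
    exact hτ (e ▸ hA)
  · intro hA
    by_contra hn
    exact hA _ hn rfl

/-- Existence of a neighborhood realizing exactly the set of types `B` is expressible. -/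
theorem dec_nb {P T : Type} [Finite T] (f : ∀ M : InModel P, M.W → T)
    (h : ∀ τ, Dec (fun M w => f M w = τ)) (B : Set T) :
    Dec (fun M w => ∃ t ∈ M.Nb w, f M '' t = B) := by
  choose δ hδ using dec_mem f h
  obtain ⟨ψ, hψ⟩ := exists_idisj (fun b : B => δ (B \ {b.1}))
  have hy : Dec (fun M w => ∀ t ∈ M.Nb w, support M (δ B) t → support M ψ t) :=
    ⟨.yields (δ B) ψ, fun M s => by simp only [support]⟩
  refine hy.not.congr fun M w => ?_
  push Not
  refine exists_congr fun t => and_congr_right fun ht => ?_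
  have hne : t ≠ ∅ := (M.nb_nonempty w t ht).ne_empty
  rw [hψ, hδ]
  simp only [hδ, hne, false_or]
  constructor
  · rintro rfl
    refine ⟨fun w hw => ⟨w, hw, rfl⟩, ?_⟩
    rintro ⟨⟨_, ⟨v, hv, rfl⟩⟩, hb⟩
    exact (hb v hv).2 rfl
  · rintro ⟨h1, h2⟩
    apply Set.Subset.antisymm
    · rintro _ ⟨v, hv, rfl⟩
      exact h1 v hv
    · intro b hb
      by_contra hn
      exact h2 ⟨⟨b, hb⟩, fun v hv => ⟨h1 v hv, fun e => hn ⟨v, hv, e⟩⟩⟩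

theorem dec_val {P : Type} [Finite P] (v : P → Bool) :
    Dec (fun (M : InModel P) w => M.V w = v) := by
  have h : ∀ p : P, Dec (fun (M : InModel P) w => M.V w p = true) :=
    fun p => ⟨.atom p, fun M s => by simp only [support]⟩
  refine (Dec.all (fun p => Dec.iff_const (v p = true) (h p))).congr fun M w => ?_
  rw [funext_iff]
  exact forall_congr' fun p => Bool.eq_iff_iff

theorem dec_nty {P : Type} [Finite P] (n : ℕ) :
    ∀ τ : NTy P n, Dec (fun M w => nty M n w = τ) := by
  induction n with
  | zero => exact fun τ => dec_val τ
  | succ n ih =>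
    rintro ⟨v, S⟩
    have := NTy.finite P n
    refine ((dec_val v).and (Dec.all (fun B : Set (NTy P n) =>
      Dec.iff_const (B ∈ S) (dec_nb (fun M w => nty M n w) ih B)))).congr fun M w => ?_
    refine Prod.ext_iff.trans (and_congr Iff.rfl ?_)
    exact Set.ext_iff

/-- over a finite set of atoms, a world-property is definable in
`InqML_⟹` iff it is closed under `∼ₙ` for some `n`. -/
theorem expressive_power_worlds {P : Type} [Fintype P]
    (C : ∀ M : InModel P, M.W → Prop) :
    (∃ φ : Form P, ∀ (M : InModel P) (w : M.W), C M w ↔ truth M w φ) ↔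
    (∃ n : ℕ, ∀ (M M' : InModel P) (w : M.W) (w' : M'.W),
      C M w → NBisimW n M w M' w' → C M' w') := by
  constructor
  · rintro ⟨φ, hφ⟩
    refine ⟨md φ, fun M M' w w' hC ⟨Z, hZ, hw⟩ => ?_⟩
    rw [hφ] at hC ⊢
    refine (support_of_nbisim hZ φ _ le_rfl le_rfl {w} {w'} ?_).1 hC
    constructor <;> simpa using hw
  · rintro ⟨n, hn⟩
    have := NTy.finite P n
    obtain ⟨α, hα⟩ := dec_mem (fun (M : InModel P) w => nty M n w) (dec_nty n)
      {τ | ∃ (M : InModel P) (w : M.W), C M w ∧ nty M n w = τ}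
    refine ⟨α, fun M w => ?_⟩
    rw [truth, hα]
    constructor
    · intro h v hv
      obtain rfl : v = w := hv
      exact ⟨M, v, h, rfl⟩
    · intro h
      obtain ⟨M', w', hC, e⟩ := h w rfl
      exact hn M' M w' w hC (nbisim_of_nty e)
end
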